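/- Let η ≥ 1 be an integer, let G be a finite simple graph, let H ⊆ V(G), and let T, C₁, …, C_ℓ be pairwise disjoint subsets of V(G) such that each C_i is disjoint from H and: (a) the induced subgraph G[C_i] is connected for every i ∈ [ℓ]; (b) N_G(C_i) ∖ H = T for every i ∈ [ℓ]; and (c) td(G[C_i]) = td(G[C_j]) for all i, j ∈ [ℓ]. Let S be an η-treedepth deletion set of G with H ⊆ S, and let 𝒥 = {C_i : i ∈ [ℓ], C_i ∩ S = ∅}. If |𝒥| ≥ η + 1, then S ∖ (C₁ ∪ ⋯ ∪ C_ℓ) is an η-treedepth deletion set of G. -/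

import Mathlib

open SimpleGraph Set

variable {V : Type*}

/-- The connected component of `x` inside the induced subgraph `G[S]`, as a subset of `V`. -/
def compIn (G : SimpleGraph V) (S : Set V) (x : V) : Set V :=
  {y | ∃ (hx : x ∈ S) (hy : y ∈ S), (G.induce S).Reachable ⟨x, hx⟩ ⟨y, hy⟩}

/-- `tdLE G n S` means that the treedepth of the induced subgraph `G[S]` is at most `n`,
following the recursive definition of treedepth: a graph has treedepth at most `n+1`
iff from every connected component one can delete a vertex leaving a graph of
treedepth at most `n`; only the empty graph has treedepth at most `0`. -/
def tdLE (G : SimpleGraph V) : ℕ → Set V → Prop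
  | 0, S => S = ∅
  | n+1, S => ∀ x ∈ S, ∃ v ∈ compIn G S x, tdLE G n (compIn G S x \ {v})

/-- The treedepth of the induced subgraph `G[S]`. -/
noncomputable def td (G : SimpleGraph V) (S : Set V) : ℕ :=
  sInf {n | tdLE G n S}

/-- `N_G(C)`: the set of vertices outside `C` having a neighbor in `C`. -/
def nbhd (G : SimpleGraph V) (C : Set V) : Set V :=
  {v | v ∉ C ∧ ∃ u ∈ C, G.Adj u v}

/-- `C` is a connected component of the induced subgraph `G[R]`. -/
def IsCompOf (G : SimpleGraph V) (R C : Set V) : Prop :=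
  ∃ x ∈ R, C = compIn G R x

/-- `S` is an `η`-treedepth deletion set of `G`: `td(G − S) ≤ η`. -/
def IsTDS (G : SimpleGraph V) (η : ℕ) (S : Set V) : Prop :=
  td G Sᶜ ≤ η

/-- `S` is a connected `η`-treedepth deletion set of `G`. -/
def IsCTDS (G : SimpleGraph V) (η : ℕ) (S : Set V) : Prop :=
  IsTDS G η S ∧ S.Nonempty ∧ (G.induce S).Connected

/-- A rooted forest with vertex set `A ⊆ V`, given by its (reflexive) ancestor relation:
`anc u v` means `u` is an ancestor of `v` (every vertex being an ancestor of itself). -/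
structure RootedForest (V : Type*) (A : Set V) where
  anc : V → V → Prop
  mem_left : ∀ {u v}, anc u v → u ∈ A
  mem_right : ∀ {u v}, anc u v → v ∈ A
  refl : ∀ v ∈ A, anc v v
  trans : ∀ {u v w}, anc u v → anc v w → anc u w
  antisymm : ∀ {u v}, anc u v → anc v u → u = v
  chain : ∀ {u w v}, anc u v → anc w v → anc u w ∨ anc w u

/-- Depth of a rooted forest: the maximum number of vertices on a root-to-leaf path,
i.e. the maximum number of ancestors of a vertex. -/
noncomputable def RootedForest.depth [Fintype V] {A : Set V} (F : RootedForest V A) : ℕ :=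
  Finset.univ.sup fun v : V => {u | F.anc u v}.ncard

/-- `F` is a treedepth decomposition of `G[A]`: the endpoints of every edge of `G[A]`
are in ancestor-descendant relation in `F`. -/
def IsTDDecompOn (G : SimpleGraph V) (A : Set V) (F : RootedForest V A) : Prop :=
  ∀ u v, u ∈ A → v ∈ A → G.Adj u v → F.anc u v ∨ F.anc v u

/-- `A` is an `(x,y)`-vertex cut in `G`: `A` avoids `x` and `y` and there is
no path from `x` to `y` in `G − A`. -/
def IsVertexCut (G : SimpleGraph V) (x y : V) (A : Set V) : Prop :=
  ∃ (hx : x ∈ Aᶜ) (hy : y ∈ Aᶜ), ¬ (G.induce Aᶜ).Reachable ⟨x, hx⟩ ⟨y, hy⟩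

/-- The weight of a subgraph: the sum of the weights of its edges. -/
noncomputable def subWeight (w : Sym2 V → ℕ) {G : SimpleGraph V} (T : G.Subgraph) : ℕ :=
  ∑ᶠ e ∈ T.edgeSet, w e

/-- The leaves (vertices with exactly one neighbor) of a subgraph. -/
def subLeaves {G : SimpleGraph V} (T : G.Subgraph) : Set V :=
  {v | (T.neighborSet v).ncard = 1}

/-- `T` is a Steiner tree for the terminal set `R` in `G`. -/
def IsSteinerTree (G : SimpleGraph V) (R : Set V) (T : G.Subgraph) : Prop :=
  T.coe.IsTree ∧ R ⊆ T.verts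

/-- `T` is a `t`-component for `R`: a tree with at most `t` leaves, all of which lie in `R`. -/
def IsTComponent (G : SimpleGraph V) (R : Set V) (t : ℕ) (T : G.Subgraph) : Prop :=
  T.coe.IsTree ∧ (subLeaves T).ncard ≤ t ∧ subLeaves T ⊆ R

/-! Adding a set `U` to `A` keeps the treedepth at most `n` as soon as `A` contains more than `n`
disjoint connected sets `C j`, each at least as deep as `U` and seeing all of `N(U) ∩ A`. If
`N(U) ∩ A` is empty, then `U` is a union of components of `G[A ∪ U]` and no deeper than a `C j`.
Otherwise `N(U) ∩ A` and all the `C j` lie in one component `K` of `G[A]`. The root of a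
decomposition of `K` meets at most one `C j`, so induction on `n` applies to `K` without its root,
and `U` can be attached to what remains. -/

section

variable {ι : Type*} {G : SimpleGraph V} {A B C D S U : Set V} {m n : ℕ} {t u v x y z : V}

theorem mem_compIn_self (hx : x ∈ S) : x ∈ compIn G S x :=
  ⟨hx, hx, Reachable.refl _⟩

theorem compIn_subset : compIn G S x ⊆ S :=
  fun _ hy => hy.2.1

theorem mem_compIn_of_adj (hy : y ∈ compIn G S x) (hz : z ∈ S) (hyz : G.Adj y z) :
    z ∈ compIn G S x := by
  obtain ⟨hx, hyS, hxy⟩ := hy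
  have hyz' : (G.induce S).Adj ⟨y, hyS⟩ ⟨z, hz⟩ := hyz
  exact ⟨hx, hz, hxy.trans hyz'.reachable⟩

theorem compIn_mono (hAB : A ⊆ B) : compIn G A x ⊆ compIn G B x := by
  rintro y ⟨hx, hy, hxy⟩
  exact ⟨hAB hx, hAB hy, hxy.map (G.induceHomOfLE hAB).toHom⟩

theorem compIn_subset_of_disjoint_nbhd (hx : x ∈ D) (hD : Disjoint (nbhd G D) S) :
    compIn G S x ⊆ D := by
  have mem_of_walk {a b : S} (p : (G.induce S).Walk a b) (ha : a.1 ∈ D) : b.1 ∈ D := by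
    induction p with
    | nil => exact ha
    | @cons a c _ hac _ ih =>
      exact ih (by_contra fun hc => hD.notMem_of_mem_left ⟨hc, a, ha, hac⟩ c.2)
  rintro y ⟨_, _, ⟨p⟩⟩
  exact mem_of_walk p hx

theorem compIn_compIn : compIn G (compIn G S x) x = compIn G S x := by
  refine compIn_subset.antisymm fun y hy => ?_
  refine compIn_subset_of_disjoint_nbhd (mem_compIn_self (mem_compIn_self hy.1)) ?_ hy
  rw [Set.disjoint_left]
  rintro z ⟨hz, w, hw, hwz⟩ hzS
  exact hz (mem_compIn_of_adj hw (mem_compIn_of_adj (compIn_subset hw) hzS hwz) hwz)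

theorem subset_compIn_of_preconnected (hC : (G.induce C).Preconnected) (hCS : C ⊆ S)
    (huC : u ∈ C) (hu : u ∈ compIn G S x) : C ⊆ compIn G S x := by
  intro z hz
  obtain ⟨hx, _, hxu⟩ := hu
  exact ⟨hx, hCS hz, hxu.trans ((hC ⟨u, huC⟩ ⟨z, hz⟩).map (G.induceHomOfLE hCS).toHom)⟩

theorem subset_compIn_of_mem_nbhd (hC : (G.induce C).Preconnected) (hCS : C ⊆ S)
    (ht : t ∈ nbhd G C) (htS : t ∈ S) : C ⊆ compIn G S t := by
  obtain ⟨_, u, hu, hut⟩ := ht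
  exact subset_compIn_of_preconnected hC hCS hu
    (mem_compIn_of_adj (mem_compIn_self htS) (hCS hu) hut.symm)

theorem nbhd_inter_subset_compIn (hC : C ⊆ compIn G S x) : nbhd G C ∩ S ⊆ compIn G S x := by
  rintro z ⟨⟨_, u, hu, huz⟩, hz⟩
  exact mem_compIn_of_adj (hC hu) hz huz

theorem disjoint_nbhd_compIn_union (hU : nbhd G U ∩ S ⊆ compIn G S x) :
    Disjoint (nbhd G (compIn G S x ∪ U)) S := by
  rw [Set.disjoint_left]
  rintro z ⟨hz, y, hy | hy, hyz⟩ hzS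
  · exact hz (.inl (mem_compIn_of_adj hy hzS hyz))
  · exact hz (.inl (hU ⟨⟨fun hzU => hz (.inr hzU), y, hy, hyz⟩, hzS⟩))

theorem exists_sdiff_singleton_subset (hAB : A ⊆ B) (hA : A.Nonempty) (v : V) :
    ∃ w ∈ A, A \ {w} ⊆ B \ {v} := by
  by_cases hv : v ∈ A
  · exact ⟨v, hv, sdiff_subset_sdiff_left hAB⟩
  · obtain ⟨w, hw⟩ := hA
    exact ⟨w, hw, sdiff_subset.trans (subset_sdiff_singleton hAB hv)⟩

theorem tdLE.subset (hB : tdLE G n B) (hAB : A ⊆ B) : tdLE G n A := by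
  induction n generalizing A B with
  | zero => exact subset_eq_empty hAB hB
  | succ n ih =>
    intro x hx
    obtain ⟨v, _, hv⟩ := hB x (hAB hx)
    obtain ⟨w, hw, hwv⟩ := exists_sdiff_singleton_subset (compIn_mono (G := G) hAB)
      ⟨x, mem_compIn_self hx⟩ v
    exact ⟨w, hw, ih hv hwv⟩

theorem tdLE.of_sdiff_singleton (h : tdLE G n (B \ {v})) : tdLE G (n + 1) B := by
  intro x hx
  obtain ⟨w, hw, hwv⟩ := exists_sdiff_singleton_subset (compIn_subset (G := G))
    ⟨x, mem_compIn_self hx⟩ v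
  exact ⟨w, hw, h.subset hwv⟩

theorem tdLE.mono (h : tdLE G m B) (hmn : m ≤ n) : tdLE G n B := by
  induction hmn with
  | refl => exact h
  | step _ ih => exact fun x hx => (ih.subset sdiff_subset).of_sdiff_singleton (v := x) x hx

theorem exists_tdLE (G : SimpleGraph V) (hB : B.Finite) : ∃ n, tdLE G n B := by
  induction B, hB using Set.Finite.induction_on with
  | empty => exact ⟨0, rfl⟩
  | @insert a s _ _ ih =>
    obtain ⟨n, hn⟩ := ih
    exact ⟨n + 1, (hn.subset (by simp)).of_sdiff_singleton (v := a)⟩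

theorem td_le_iff (hB : B.Finite) : td G B ≤ n ↔ tdLE G n B :=
  ⟨(Nat.sInf_mem (exists_tdLE G hB)).mono, fun h => Nat.sInf_le h⟩

theorem tdLE_of_forall_compIn (h : ∀ x ∈ B, tdLE G n (compIn G B x)) : tdLE G n B := by
  cases n with
  | zero =>
    refine eq_empty_of_forall_notMem fun x hx => ?_
    exact eq_empty_iff_forall_notMem.1 (h x hx) x (mem_compIn_self hx)
  | succ n =>
    intro x hx
    simpa only [compIn_compIn] using h x hx x (mem_compIn_self hx)

theorem tdLE.union (hA : tdLE G n A) (hB : tdLE G n B) (hAB : Disjoint (nbhd G B) A) :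
    tdLE G n (A ∪ B) := by
  refine tdLE_of_forall_compIn fun x hx => ?_
  by_cases hxB : x ∈ B
  · refine hB.subset (compIn_subset_of_disjoint_nbhd hxB ?_)
    exact disjoint_union_right.2 ⟨hAB, Set.disjoint_left.2 fun _ hz => hz.1⟩
  · refine hA.subset ((compIn_subset_of_disjoint_nbhd (D := A \ B)
      ⟨hx.resolve_right hxB, hxB⟩ (Set.disjoint_left.2 ?_)).trans sdiff_subset)
    rintro z ⟨hz, y, ⟨hyA, hyB⟩, hyz⟩ hzAB
    have hzB : z ∈ B := by_contra fun hzB => hz ⟨hzAB.resolve_right hzB, hzB⟩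
    exact hAB.notMem_of_mem_left ⟨hyB, z, hzB, hyz.symm⟩ hyA

theorem tdLE_iUnion {C : ι → Set V} (h : ∀ i, tdLE G n (C i))
    (hC : ∀ i, Disjoint (nbhd G (C i)) (⋃ j, C j)) : tdLE G n (⋃ i, C i) := by
  refine tdLE_of_forall_compIn fun x hx => ?_
  obtain ⟨i, hi⟩ := mem_iUnion.1 hx
  exact (h i).subset (compIn_subset_of_disjoint_nbhd hi (hC i))

theorem encard_le_encard_sep_notMem_add_one {C : ι → Set V} {J : Set ι}
    (hC : J.PairwiseDisjoint C) (v : V) : J.encard ≤ {j ∈ J | v ∉ C j}.encard + 1 := by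
  have hsub : {j ∈ J | v ∈ C j}.Subsingleton := fun _ hi _ hj =>
    hC.elim_set hi.1 hj.1 v hi.2 hj.2
  calc J.encard ≤ ({j ∈ J | v ∉ C j} ∪ {j ∈ J | v ∈ C j}).encard :=
        encard_le_encard fun j hj => (em' (v ∈ C j)).imp (⟨hj, ·⟩) (⟨hj, ·⟩)
    _ ≤ {j ∈ J | v ∉ C j}.encard + {j ∈ J | v ∈ C j}.encard := encard_union_le _ _
    _ ≤ {j ∈ J | v ∉ C j}.encard + 1 := by gcongr; exact encard_le_one_iff_subsingleton.2 hsub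

theorem tdLE.union_of_lt_encard {C : ι → Set V} {J : Set ι} (hA : tdLE G n A)
    (hCA : ∀ j ∈ J, C j ⊆ A) (hdisj : J.PairwiseDisjoint C)
    (hconn : ∀ j ∈ J, (G.induce (C j)).Preconnected)
    (hU : ∀ j ∈ J, nbhd G U ∩ A ⊆ nbhd G (C j))
    (htd : ∀ j ∈ J, ∀ k, tdLE G k (C j) → tdLE G k U) (hJ : n < J.encard) :
    tdLE G n (A ∪ U) := by
  induction n generalizing A J with
  | zero =>
    obtain ⟨j, hj⟩ := encard_pos.1 (pos_of_gt hJ)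
    have hA_empty : A = ∅ := hA
    exact hA.union (htd j hj 0 (hA.subset (hCA j hj))) (hA_empty ▸ disjoint_empty _)
  | succ n ih =>
    obtain ⟨j, hj⟩ := encard_pos.1 (pos_of_gt hJ)
    by_cases hUA : Disjoint (nbhd G U) A
    · exact hA.union (htd j hj _ (hA.subset (hCA j hj))) hUA
    obtain ⟨t, htU, htA⟩ := not_disjoint_iff.1 hUA
    have hCK (i) (hi : i ∈ J) : C i ⊆ compIn G A t :=
      subset_compIn_of_mem_nbhd (hconn i hi) (hCA i hi) (hU i hi ⟨htU, htA⟩) htA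
    have hUK : nbhd G U ∩ A ⊆ compIn G A t := fun s hs =>
      nbhd_inter_subset_compIn (hCK j hj) ⟨hU j hj hs, hs.2⟩
    obtain ⟨v, _, hv⟩ := hA t htA
    have hJv : n < {i ∈ J | v ∉ C i}.encard := by
      refine lt_of_add_lt_add_right (a := 1) (lt_of_lt_of_le ?_
        (encard_le_encard_sep_notMem_add_one hdisj v))
      exact_mod_cast hJ
    have hKv : tdLE G n (compIn G A t \ {v} ∪ U) :=
      ih hv (fun i hi => subset_sdiff_singleton (hCK i hi.1) hi.2)
        (hdisj.subset (sep_subset _ _)) (fun i hi => hconn i hi.1)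
        (fun i hi => (inter_subset_inter_right _ (sdiff_subset.trans compIn_subset)).trans
          (hU i hi.1))
        (fun i hi => htd i hi.1) hJv
    have hK : tdLE G (n + 1) (compIn G A t ∪ U) := by
      refine (hKv.subset (A := (compIn G A t ∪ U) \ {v}) ?_).of_sdiff_singleton
      rw [union_sdiff_distrib]
      exact union_subset_union_right _ sdiff_subset
    exact (hA.union hK (disjoint_nbhd_compIn_union hUK)).subset
      (union_subset_union_right _ subset_union_right)

end

/-- Stated with `tdLE` because `td` takes the junk value `0` on graphs of infinite treedepth. -/
theorem stmt0_general {ι V : Type*} (η : ℕ) (G : SimpleGraph V) (H T : Set V) (C : ι → Set V)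
    (hCC : ∀ i j, i ≠ j → Disjoint (C i) (C j))
    (hCH : ∀ i, Disjoint (C i) H)
    (hconn : ∀ i, (G.induce (C i)).Preconnected)
    (hnb : ∀ i, nbhd G (C i) \ H = T)
    (htd : ∀ i j n, tdLE G n (C i) ↔ tdLE G n (C j))
    (S : Set V) (hS : tdLE G η Sᶜ) (hHS : H ⊆ S)
    (hJ : η < {i | C i ∩ S = ∅}.encard) :
    tdLE G η (S \ ⋃ i, C i)ᶜ := by
  have hH : Disjoint (⋃ i, C i) H := disjoint_iUnion_left.2 hCH
  have hnbC (i j) : nbhd G (C i) \ H ⊆ nbhd G (C j) := by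
    rw [hnb i, ← hnb j]
    exact sdiff_subset
  have hsep (i) : Disjoint (nbhd G (C i)) (⋃ j, C j) := by
    refine Set.disjoint_left.2 fun z hz hzC => ?_
    obtain ⟨j, hj⟩ := mem_iUnion.1 hzC
    exact (hnbC i j ⟨hz, hH.notMem_of_mem_left hzC⟩).1 hj
  have hU (j) : nbhd G (⋃ i, C i) ∩ Sᶜ ⊆ nbhd G (C j) := by
    rintro z ⟨⟨hzC, u, hu, huz⟩, hzS⟩
    obtain ⟨i, hi⟩ := mem_iUnion.1 hu
    have hzi : z ∈ nbhd G (C i) := ⟨fun hz => hzC (mem_iUnion_of_mem i hz), u, hi, huz⟩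
    exact hnbC i j ⟨hzi, fun hzH => hzS (hHS hzH)⟩
  rw [sdiff_eq, compl_inter, compl_compl]
  exact hS.union_of_lt_encard (fun i hi => (disjoint_iff_inter_eq_empty.2 hi).subset_compl_right)
    (fun i _ j _ hij => hCC i j hij) (fun i _ => hconn i) (fun j _ => hU j)
    (fun j _ k hj => tdLE_iUnion (fun i => (htd j i k).1 hj) hsep) hJ

/-- if at least `η + 1` of the pairwise disjoint, connected, equal-treedepth
sets `C i` with common neighborhood `T` outside `H` avoid the `η`-treedepth deletion set
`S ⊇ H`, then removing all of the `C i` from `S` still gives an `η`-treedepth deletion set. -/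
theorem stmt0 {V : Type*} [Fintype V] (η : ℕ) (hη : 1 ≤ η) (G : SimpleGraph V)
    (H T : Set V) (ℓ : ℕ) (C : Fin ℓ → Set V)
    (hTC : ∀ i, Disjoint T (C i))
    (hCC : ∀ i j, i ≠ j → Disjoint (C i) (C j))
    (hCH : ∀ i, Disjoint (C i) H)
    (hconn : ∀ i, (G.induce (C i)).Connected)
    (hnb : ∀ i, nbhd G (C i) \ H = T)
    (htd : ∀ i j, td G (C i) = td G (C j))
    (S : Set V) (hS : IsTDS G η S) (hHS : H ⊆ S)
    (hJ : η + 1 ≤ {i : Fin ℓ | C i ∩ S = ∅}.ncard) :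
    IsTDS G η (S \ ⋃ i, C i) :=
  (td_le_iff (toFinite _)).2 <| stmt0_general η G H T C hCC hCH (fun i => (hconn i).preconnected)
    hnb (fun i j _ => by simp only [← td_le_iff (toFinite _), htd i j]) S
    ((td_le_iff (toFinite _)).1 hS) hHS (by rw [← (toFinite _).cast_ncard_eq]; exact_mod_cast hJ)
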